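/- Let F be a normed field whose norm satisfies ‖(n : F)‖ = n for every natural number n. Let A be a non-unital normed algebra over F, let B be a non-unital normed algebra over F whose underlying metric space is complete, and let f : A → B be an isometric non-unital F-algebra homomorphism (additive, multiplicative, F-linear, and ‖f a‖ = ‖a‖ for all a) with dense range, so that B is a completion of A. If B is nil (every element b of B satisfies b^n = 0 for some n ≥ 1), then A is nilpotent (there exists N ≥ 1 such that every product of N elements of A is zero). -/

import Mathlib

/-!
By Baire's theorem one of the closed sets `{b | b ^ (n + 1) = 0}` contains a ball around some `b₀`.
For every `x`, the polynomial `(b₀ + t x) ^ (n + 1)` in `t` then vanishes at `t = 1 / k` for all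
large `k` (this is where the arithmetic norm enters), so its leading coefficient `x ^ (n + 1)` is
zero: `B` is nil of bounded index. The Nagata–Higman theorem (`nagata_higman`), applied in the
unitization of `B`, shows that `B` is nilpotent, and `A` embeds in `B`.

The Nagata–Higman theorem is proved relative to an ideal `I`, by induction on the exponent.
If `x ^ (m + 1) ∈ I` for all `x ∈ A`, linearizing gives `∑ i, x ^ (m - i) * y * x ^ i ∈ I`, and
summing `x ^ (m - i) * z * y ^ (m - j) * x ^ i * y ^ j` in two ways (Higgins' trick) gives
`x ^ m * z * y ^ m ∈ I`. The colon ideals `{a | a A y ^ m ⊆ I for all y}` and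
`{b | A ^ N A b ⊆ I}` both contain all `m`-th powers, so two uses of the induction hypothesis yield
`A ^ N * A * A ^ N ≤ I`.
-/

/-- `nupow a n` is the `(n+1)`-fold product `a * a * ⋯ * a` (so `nupow a n = a ^ (n+1)`);
this makes sense in any (possibly non-unital) multiplicative structure. -/
def nupow {A : Type*} [Mul A] (a : A) : ℕ → A
  | 0 => a
  | n + 1 => nupow a n * a

/-- `A` is nil: every element `a` satisfies `a ^ n = 0` for some `n ≥ 1`. -/
def IsNilAlgebra (A : Type*) [Mul A] [Zero A] : Prop :=
  ∀ a : A, ∃ n : ℕ, nupow a n = 0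

/-- `A` is nilpotent: there is `N ≥ 1` such that every product of `N` elements of `A`
(here written as `a` followed by a list `l` of the remaining `N - 1` factors) is zero. -/
def IsNilpotentAlgebra (A : Type*) [Mul A] [Zero A] : Prop :=
  ∃ N : ℕ, 1 ≤ N ∧ ∀ (a : A) (l : List A), l.length + 1 = N → l.foldl (· * ·) a = 0

/-- A polynomial function with coefficients in a vector space that takes values in a subspace `I` at
infinitely many points has all its coefficients in `I`. -/
lemma coeff_mem_of_infinite {F M : Type*} [Field F] [AddCommGroup M] [Module F M]
    (I : Submodule F M) (n : ℕ) (c : ℕ → M) (s : Set F) (hs : s.Infinite)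
    (h : ∀ t ∈ s, ∑ k ∈ Finset.range n, t ^ k • c k ∈ I) (k : ℕ) (hk : k < n) : c k ∈ I := by
  rw [← Submodule.Quotient.mk_eq_zero, ← Module.forall_dual_apply_eq_zero_iff F]
  intro φ
  let p : Polynomial F :=
    ∑ k ∈ Finset.range n, Polynomial.monomial k (φ (Submodule.Quotient.mk (c k)))
  have hp : p = 0 := by
    refine Polynomial.eq_zero_of_infinite_isRoot p (hs.mono fun t ht => ?_)
    have h1 := (Submodule.Quotient.mk_eq_zero I).2 (h t ht)
    have h2 : φ (I.mkQ (∑ k ∈ Finset.range n, t ^ k • c k)) = 0 := by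
      rw [Submodule.mkQ_apply, h1, map_zero]
    simp only [map_sum, map_smul, smul_eq_mul, Submodule.mkQ_apply] at h2
    simp only [Set.mem_ofPred_eq, Polynomial.IsRoot.def, p, Polynomial.eval_finsetSum,
      Polynomial.eval_monomial]
    rw [← h2]
    exact Finset.sum_congr rfl fun _ _ => mul_comm _ _
  have := congrArg (fun q => Polynomial.coeff q k) hp
  simpa [p, Polynomial.coeff_monomial, hk] using this

/-- `(x + t y) ^ n` is a polynomial in the central variable `t`, with linear coefficient
`∑ i, x ^ (n - 1 - i) * y * x ^ i` and leading coefficient `y ^ n`. -/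
lemma exists_expansion {F R : Type*} [Field F] [Ring R] [Algebra F R] (x y : R) (n : ℕ) :
    ∃ c : ℕ → R, (∀ t : F, (x + t • y) ^ n = ∑ k ∈ Finset.range (n + 1), t ^ k • c k) ∧
      c 0 = x ^ n ∧ c 1 = ∑ i ∈ Finset.range n, x ^ (n - 1 - i) * y * x ^ i ∧
      c n = y ^ n ∧ ∀ k, n < k → c k = 0 := by
  induction n with
  | zero =>
    refine ⟨fun k => if k = 0 then 1 else 0, ?_, ?_, ?_, ?_, ?_⟩ <;> simp
    intro k hk hk'; omega
  | succ n ih =>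
    obtain ⟨c, h, h0, h1, hn, hlt⟩ := ih
    refine ⟨fun k => c k * x + (if k = 0 then 0 else c (k - 1) * y), ?_, ?_, ?_, ?_, ?_⟩
    · intro t
      have e1 : ∑ k ∈ Finset.range (n + 1 + 1), t ^ k • (c k * x)
          = (∑ k ∈ Finset.range (n + 1), t ^ k • c k) * x := by
        rw [Finset.sum_range_succ, hlt (n + 1) (by omega), Finset.sum_mul]
        simp
      have e2 : ∑ k ∈ Finset.range (n + 1 + 1), t ^ k • (if k = 0 then 0 else c (k - 1) * y)
          = (∑ k ∈ Finset.range (n + 1), t ^ k • c k) * (t • y) := by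
        rw [Finset.sum_range_succ', Finset.sum_mul]
        simp [pow_succ', mul_smul, smul_comm t]
      simp only [smul_add, Finset.sum_add_distrib]
      rw [e1, e2, pow_succ, h, mul_add]
    · simp [h0, pow_succ]
    · simp only [h1, h0, one_ne_zero, if_false, Nat.sub_self]
      rw [Finset.sum_range_succ', Finset.sum_mul]
      simp only [Nat.add_sub_cancel, pow_zero, mul_one, Nat.sub_zero]
      congr 1
      refine Finset.sum_congr rfl fun i _ => ?_
      rw [pow_succ, show n - 1 - i = n - (i + 1) by omega]
      simp only [mul_assoc]
    · simp [hlt (n + 1) (by omega), hn, pow_succ]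
    · intro k hk
      simp [hlt k (by omega), hlt (k - 1) (by omega)]

/-- Higgins' trick: if `A` is nil of index `m + 1` modulo `I`, then
`x ^ m * z * y ^ m` vanishes modulo `I`. -/
lemma pow_mul_mul_pow_mem {F R : Type*} [Field F] [CharZero F] [Ring R] [Algebra F R]
    (A I : Ideal R) [A.IsTwoSided] [I.IsTwoSided] (m : ℕ)
    (h : ∀ x ∈ A, x ^ (m + 1) ∈ I) (x y z : R) (hx : x ∈ A) (hy : y ∈ A) (hz : z ∈ A) :
    x ^ m * z * y ^ m ∈ I := by
  have lin : ∀ x ∈ A, ∀ y ∈ A,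
      ∑ i ∈ Finset.range (m + 1), x ^ (m - i) * y * x ^ i ∈ I := by
    intro x hx y hy
    obtain ⟨c, hc, -, h1, -, -⟩ := exists_expansion (F := F) x y (m + 1)
    rw [Nat.add_sub_cancel] at h1
    rw [← h1]
    refine coeff_mem_of_infinite (I.restrictScalars F) (m + 1 + 1) c Set.univ
      Set.infinite_univ (fun t _ => ?_) 1 (by omega)
    rw [← hc t]
    refine h _ (A.add_mem hx ?_)
    rw [Algebra.smul_def]
    exact A.mul_mem_left _ hy
  have total : ∑ i ∈ Finset.range (m + 1), ∑ j ∈ Finset.range (m + 1),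
      x ^ (m - i) * (z * y ^ (m - j)) * x ^ i * y ^ j ∈ I := by
    rw [Finset.sum_comm]
    refine I.sum_mem fun j _ => ?_
    rw [← Finset.sum_mul]
    exact I.mul_mem_right _ (lin x hx _ (A.mul_mem_right _ hz))
  rw [Finset.sum_range_succ'] at total
  have hrest : ∑ i ∈ Finset.range m, ∑ j ∈ Finset.range (m + 1),
      x ^ (m - (i + 1)) * (z * y ^ (m - j)) * x ^ (i + 1) * y ^ j ∈ I := by
    refine I.sum_mem fun i _ => ?_
    have := I.mul_mem_left (x ^ (m - (i + 1)) * z)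
      (lin y hy (x ^ (i + 1)) (by rw [pow_succ]; exact A.mul_mem_left _ hx))
    rw [Finset.mul_sum] at this
    simpa only [mul_assoc] using this
  have hzero := (I.add_mem_iff_right hrest).1 total
  have hconst : ∑ j ∈ Finset.range (m + 1), x ^ (m - 0) * (z * y ^ (m - j)) * x ^ 0 * y ^ j
      = ((m + 1 : ℕ) : F) • (x ^ m * z * y ^ m) := by
    rw [Finset.sum_congr rfl (g := fun _ => x ^ m * z * y ^ m)]
    · rw [Finset.sum_const, Finset.card_range, Nat.cast_smul_eq_nsmul]
    · intro j hj
      have : m - j + j = m := by have := Finset.mem_range.1 hj; omega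
      rw [pow_zero, mul_one, Nat.sub_zero, mul_assoc, mul_assoc z, ← pow_add, this, mul_assoc]
  rw [hconst] at hzero
  have hne : ((m + 1 : ℕ) : F) ≠ 0 := Nat.cast_ne_zero.2 (Nat.succ_ne_zero m)
  exact ((I.restrictScalars F).smul_mem_iff hne).1 hzero

/-- The Nagata–Higman theorem in characteristic zero, relative to an ideal `I`: a two-sided ideal
`A` that is nil of bounded index modulo `I` is nilpotent modulo `I`. -/
theorem nagata_higman {F R : Type*} [Field F] [CharZero F] [Ring R] [Algebra F R]
    (A : Ideal R) [A.IsTwoSided] (n : ℕ) : ∀ (I : Ideal R) [I.IsTwoSided],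
    (∀ x ∈ A, x ^ (n + 1) ∈ I) → ∃ N : ℕ, A ^ (N + 1) ≤ I := by
  induction n with
  | zero =>
    intro I _ h
    exact ⟨0, fun x hx => by simpa using h x (by rwa [zero_add, Submodule.pow_one] at hx)⟩
  | succ n ih =>
    intro I _ h
    let J₁ : Ideal R :=
      { carrier := {a | ∀ z ∈ A, ∀ y ∈ A, a * z * y ^ (n + 1) ∈ I}
        zero_mem' := by intro z _ y _; simp
        add_mem' := by
          intro a b ha hb z hz y hy
          rw [add_mul, add_mul]
          exact I.add_mem (ha z hz y hy) (hb z hz y hy)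
        smul_mem' := by
          intro r a ha z hz y hy
          rw [smul_eq_mul, mul_assoc r, mul_assoc r]
          exact I.mul_mem_left _ (ha z hz y hy) }
    have : J₁.IsTwoSided := ⟨by
      intro a r ha z hz y hy
      rw [mul_assoc a]
      exact ha _ (A.mul_mem_left _ hz) y hy⟩
    obtain ⟨N, hN⟩ := ih J₁ fun x hx z hz y hy =>
      pow_mul_mul_pow_mem (F := F) A I (n + 1) h x y z hx hy hz
    let J₂ : Ideal R :=
      { carrier := {b | ∀ p ∈ A ^ (N + 1), ∀ z ∈ A, p * z * b ∈ I}
        zero_mem' := by intro p _ z _; simp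
        add_mem' := by
          intro a b ha hb p hp z hz
          rw [mul_add]
          exact I.add_mem (ha p hp z hz) (hb p hp z hz)
        smul_mem' := by
          intro r b hb p hp z hz
          rw [smul_eq_mul, ← mul_assoc, mul_assoc p]
          exact hb p hp _ (A.mul_mem_right _ hz) }
    have : J₂.IsTwoSided := ⟨by
      intro b r hb p hp z hz
      rw [← mul_assoc]
      exact I.mul_mem_right _ (hb p hp z hz)⟩
    obtain ⟨M, hM⟩ := ih J₂ fun y hy p hp z hz => hN hp z hz y hy
    refine ⟨N + 1 + M + 1, ?_⟩
    rw [show N + 1 + M + 1 + 1 = (N + 1) + (1 + (M + 1)) by ring, Ideal.IsTwoSided.pow_add (N + 1),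
      Ideal.IsTwoSided.pow_add 1, Submodule.pow_one]
    refine Ideal.mul_le.2 fun p hp w hw => ?_
    induction hw using Submodule.mul_induction_on' with
    | mem_mul_mem z hz b hb => rw [← mul_assoc]; exact hM hb p hp z hz
    | add u _ v _ hu hv => rw [mul_add]; exact I.add_mem hu hv

lemma continuous_nupow {B : Type*} [NonUnitalNormedRing B] (n : ℕ) :
    Continuous fun b : B => nupow b n := by
  induction n with
  | zero => exact continuous_id
  | succ n ih => exact ih.mul continuous_id

lemma inr_nupow (F : Type*) {B : Type*} [Field F] [NonUnitalRing B] [Module F B]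
    [IsScalarTower F B B] [SMulCommClass F B B] (b : B) (n : ℕ) :
    ((nupow b n : B) : Unitization F B) = (b : Unitization F B) ^ (n + 1) := by
  induction n with
  | zero => simp [nupow]
  | succ n ih => rw [nupow, Unitization.inr_mul, ih, pow_succ _ (n + 1)]

/-- A complete nil algebra over a field with arithmetic norm is nil of bounded index. -/
lemma exists_bounded_index {F B : Type*} [NormedField F] [CharZero F] [NonUnitalNormedRing B]
    [NormedSpace F B] [IsScalarTower F B B] [SMulCommClass F B B] [CompleteSpace B]
    (hnorm : ∀ n : ℕ, ‖(n : F)‖ = n) (hnil : IsNilAlgebra B) :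
    ∃ n : ℕ, ∀ b : B, nupow b n = 0 := by
  obtain ⟨n, b₀, hb₀⟩ := nonempty_interior_of_iUnion_of_closed
    (f := fun n => {b : B | nupow b n = 0})
    (fun n => isClosed_eq (continuous_nupow n) continuous_const)
    (Set.eq_univ_of_forall fun b => Set.mem_iUnion.2 (hnil b))
  refine ⟨n, fun x => ?_⟩
  have hnhds : {b : B | nupow b n = 0} ∈ nhds b₀ := mem_interior_iff_mem_nhds.1 hb₀
  have hlim0 : Filter.Tendsto (fun k : ℕ => ((k : F))⁻¹) Filter.atTop (nhds 0) := by
    rw [tendsto_zero_iff_norm_tendsto_zero]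
    simp only [norm_inv, hnorm]
    exact tendsto_inv_atTop_nhds_zero_nat
  have hlim : Filter.Tendsto (fun k : ℕ => b₀ + ((k : F))⁻¹ • x) Filter.atTop (nhds b₀) := by
    simpa using (hlim0.smul_const x).const_add b₀
  obtain ⟨K, hK⟩ := Filter.eventually_atTop.1 (hlim.eventually hnhds)
  have hinf : ((fun k : ℕ => ((k : F))⁻¹) '' Set.Ici K).Infinite :=
    (Set.Ici_infinite K).image fun a _ b _ hab => Nat.cast_injective (inv_injective hab)
  obtain ⟨c, hc, -, -, hlead, -⟩ :=
    exists_expansion (F := F) (b₀ : Unitization F B) (x : Unitization F B) (n + 1)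
  have hmem := coeff_mem_of_infinite (⊥ : Submodule F (Unitization F B)) (n + 1 + 1) c _ hinf
    (by
      rintro _ ⟨k, hk, rfl⟩
      have h0 : nupow (b₀ + ((k : F))⁻¹ • x) n = 0 := hK k hk
      rw [← hc, ← Unitization.inr_smul, ← Unitization.inr_add, ← inr_nupow, h0]
      simp) (n + 1) (by omega)
  rw [hlead, ← inr_nupow, Submodule.mem_bot] at hmem
  exact Unitization.inr_injective (R := F) (by simpa using hmem)

/-- If the completion of a non-unital normed algebra over a normed field of characteristic zero
(with arithmetic norm) is nil, then the algebra itself is nilpotent. The completion is modeled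
by an isometric non-unital algebra homomorphism with dense range into a complete algebra. -/
theorem nilpotent_of_completion_nil
    (F : Type*) [NormedField F]
    (A : Type*) [NonUnitalNormedRing A] [NormedSpace F A]
    [IsScalarTower F A A] [SMulCommClass F A A]
    (B : Type*) [NonUnitalNormedRing B] [NormedSpace F B]
    [IsScalarTower F B B] [SMulCommClass F B B] [CompleteSpace B]
    (hnorm : ∀ n : ℕ, ‖(n : F)‖ = n)
    (f : A →ₙₐ[F] B) (hiso : ∀ a : A, ‖f a‖ = ‖a‖) (hdense : DenseRange f)
    (hnil : IsNilAlgebra B) :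
    IsNilpotentAlgebra A := by
  have : CharZero F := charZero_of_inj_zero fun n hn => by
    have := hnorm n
    rw [hn, norm_zero] at this
    exact_mod_cast this.symm
  obtain ⟨n, hn⟩ := exists_bounded_index hnorm hnil
  -- The augmentation ideal of the unitization is the copy of `B` inside it.
  let K : Ideal (Unitization F B) := RingHom.ker (Unitization.fstHom F B)
  have hK : ∀ b : B, (b : Unitization F B) ∈ K := fun b => by
    simp [K, RingHom.mem_ker]
  obtain ⟨N, hN⟩ := nagata_higman (F := F) K n ⊥ (by
    intro u hu
    have hu' : u.fst = 0 := hu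
    have : u = ((u.snd : B) : Unitization F B) := Unitization.ext (by simpa using hu') (by simp)
    rw [this, ← inr_nupow, hn]
    simp)
  have key : ∀ (l : List A) (a : A) (k : ℕ), (f a : Unitization F B) ∈ K ^ k →
      (f (l.foldl (· * ·) a) : Unitization F B) ∈ K ^ (k + l.length) := by
    intro l
    induction l with
    | nil => intro a k h; simpa using h
    | cons b l ih =>
      intro a k h
      have := ih (a * b) (k + 1) (by
        rw [map_mul, Unitization.inr_mul, Submodule.pow_succ]
        exact Ideal.mul_mem_mul h (hK _))
      rw [List.foldl_cons, List.length_cons, show k + (l.length + 1) = k + 1 + l.length by ring]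
      exact this
  refine ⟨N + 1, by omega, fun a l hl => ?_⟩
  have h := key l a 1 (by rw [Submodule.pow_one]; exact hK _)
  rw [show 1 + l.length = N + 1 by omega] at h
  have h0 : f (l.foldl (· * ·) a) = 0 :=
    Unitization.inr_injective (R := F) (by simpa using hN h)
  rw [← norm_eq_zero, ← hiso, h0, norm_zero]
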